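/- Let k be a finite field with 4 elements and let α ∈ k satisfy α² + α + 1 = 0. Then every nonzero binary cubic form f ∈ k[x,y] is GL₂(k)-equivalent to one of the following 13 forms: x³, αx³, α²x³, xy², x³ + y³, α(x³ + y³), α²(x³ + y³), x(x² + xy + αy²), αx(x² + xy + αy²), α²x(x² + xy + αy²), x³ + αy³, α(x³ + αy³), α²(x³ + αy³). -/

import Mathlib

/-! The classification is by the roots of `f` on the projective line over `k = 𝔽₄`.
Since `bind₁` substitutions compose as matrices do, `f` may be replaced by any form obtained from it
by an invertible substitution (`Good.of_subst`), and everything reduces to explicit substitutions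
on the four coefficients (`good_step`).

* If `f` has a root, move it so that `f = x (a x² + b x y + c y²)`. A repeated root leads
  to `e x³` or `x y²` (here every element of `k` is a square). Otherwise
  `f ~ e x (g x² + x y + y²)`, where `y ↦ y + t x` changes `g` by the Artin–Schreier value
  `t² + t ∈ {0, 1}`; so one may take `g = 0`, giving `e x y (x + y) ~ e (x³ + y³)`, or `g = α`, giving
  the forms with exactly one rational root.
* If `f` has no root, rescale and complete the cube (`3 = 1` in `k`) to get
  `e (x³ + c x y² + d y³)`. If `c = 0`, then `d` is not a cube, so `d ∈ {α, α²}`. If `c ≠ 0`, rescaling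
  `y` gives `c = 1`, and `x³ + x y² + d y³` has a root unless `d = 1`; finally
  `x³ + x y² + y³` is carried to a multiple of `x³ + α y³` by an explicit matrix.

Scalars cannot be absorbed into the variables, because cubes of nonzero elements of `k` are `1`. -/

open MvPolynomial


namespace BinaryCubic

variable {k : Type*} [Field k]

/-- The substitution `x ↦ a₁₁ x + a₁₂ y`, `y ↦ a₂₁ x + a₂₂ y` given by a matrix `A`. -/
noncomputable abbrev subst (A : Matrix (Fin 2) (Fin 2) k) :
    MvPolynomial (Fin 2) k →ₐ[k] MvPolynomial (Fin 2) k :=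
  MvPolynomial.bind₁ (fun i => MvPolynomial.C (A i 0) * MvPolynomial.X 0
          + MvPolynomial.C (A i 1) * MvPolynomial.X 1)

/-- The list of representatives in the classification. -/
def reps (α : k) : Set (MvPolynomial (Fin 2) k) :=
  {X 0 ^ 3,
          C α * X 0 ^ 3,
          C (α ^ 2) * X 0 ^ 3,
          X 0 * X 1 ^ 2,
          X 0 ^ 3 + X 1 ^ 3,
          C α * (X 0 ^ 3 + X 1 ^ 3),
          C (α ^ 2) * (X 0 ^ 3 + X 1 ^ 3),
          X 0 * (X 0 ^ 2 + X 0 * X 1 + C α * X 1 ^ 2),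
          C α * (X 0 * (X 0 ^ 2 + X 0 * X 1 + C α * X 1 ^ 2)),
          C (α ^ 2) * (X 0 * (X 0 ^ 2 + X 0 * X 1 + C α * X 1 ^ 2)),
          X 0 ^ 3 + C α * X 1 ^ 3,
          C α * (X 0 ^ 3 + C α * X 1 ^ 3),
          C (α ^ 2) * (X 0 ^ 3 + C α * X 1 ^ 3)}

/-- `f` is equivalent to one of the representatives. -/
def Good (α : k) (f : MvPolynomial (Fin 2) k) : Prop :=
  ∃ A : Matrix (Fin 2) (Fin 2) k, A.det ≠ 0 ∧ subst A f ∈ reps α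

lemma subst_subst (A B : Matrix (Fin 2) (Fin 2) k) (f : MvPolynomial (Fin 2) k) :
    subst A (subst B f) = subst (B * A) f := by
  have h : (subst A).comp (subst B) = subst (B * A) := by
    apply MvPolynomial.algHom_ext
    intro i
    simp only [AlgHom.comp_apply, subst, bind₁_X_right, map_add, map_mul, bind₁_C_right,
      Matrix.mul_apply, Fin.sum_univ_two]
    ring
  exact DFunLike.congr_fun h f

lemma Good.of_subst {α : k} {f : MvPolynomial (Fin 2) k} (B : Matrix (Fin 2) (Fin 2) k)
    (hB : B.det ≠ 0) (h : Good α (subst B f)) : Good α f := by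
  obtain ⟨A, hA, h⟩ := h
  exact ⟨B * A, by rw [Matrix.det_mul]; exact mul_ne_zero hB hA, by rwa [subst_subst] at h⟩

lemma Good.of_mem {α : k} {f : MvPolynomial (Fin 2) k} (h : f ∈ reps α) : Good α f :=
  ⟨1, by simp, by
    have : subst (1 : Matrix (Fin 2) (Fin 2) k) f = f := by
      have h : subst (1 : Matrix (Fin 2) (Fin 2) k) = AlgHom.id k _ := by
        apply MvPolynomial.algHom_ext
        intro i
        fin_cases i <;> simp [subst]
      exact DFunLike.congr_fun h f
    rwa [this]⟩

/-- The cubic form `a x³ + b x² y + c x y² + d y³`. -/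
noncomputable def form (a b c d : k) : MvPolynomial (Fin 2) k :=
  C a * X 0 ^ 3 + C b * (X 0 ^ 2 * X 1) + C c * (X 0 * X 1 ^ 2) + C d * X 1 ^ 3

lemma eq_form {f : MvPolynomial (Fin 2) k} (hf : f.IsHomogeneous 3) :
    ∃ a b c d, f = form a b c d := by
  refine ⟨f.coeff (Finsupp.single 0 3), f.coeff (Finsupp.single 0 2 + Finsupp.single 1 1),
    f.coeff (Finsupp.single 0 1 + Finsupp.single 1 2), f.coeff (Finsupp.single 1 3), ?_⟩
  have h0 : ∀ (i j : ℕ) (a : k), C a * (X 0 ^ i * X 1 ^ j) =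
      monomial (Finsupp.single (0 : Fin 2) i + Finsupp.single 1 j) a := by
    intro i j a
    rw [X_pow_eq_monomial, X_pow_eq_monomial, monomial_mul, C_mul_monomial]
    simp
  have h1 : ∀ a b c d : k, form a b c d =
      C a * (X 0 ^ 3 * X 1 ^ 0) + C b * (X 0 ^ 2 * X 1 ^ 1) + C c * (X 0 ^ 1 * X 1 ^ 2)
        + C d * (X 0 ^ 0 * X 1 ^ 3) := by
    intro a b c d; simp [form]
  have h2 : ∀ (m : Fin 2 →₀ ℕ) (i j : ℕ),
      Finsupp.single 0 i + Finsupp.single 1 j = m ↔ i = m 0 ∧ j = m 1 := by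
    intro m i j
    rw [Finsupp.ext_iff]
    simp [Fin.forall_fin_two]
  ext m
  rw [h1]
  simp only [h0, coeff_add, coeff_monomial, h2]
  by_cases hm : m.degree = 3
  · have hm' : m 0 + m 1 = 3 := by
      rw [← hm, Finsupp.degree_eq_sum, Fin.sum_univ_two]
    have hm0 : m 0 ≤ 3 := by omega
    have key : Finsupp.single 0 (m 0) + Finsupp.single 1 (m 1) = m := (h2 m _ _).2 ⟨rfl, rfl⟩
    generalize m 0 = i at *
    generalize m 1 = j at *
    obtain rfl : j = 3 - i := by omega
    rw [← key]
    interval_cases i <;> simp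
  · rw [hf.coeff_eq_zero hm]
    have hm' : m 0 + m 1 ≠ 3 := by
      rwa [← Fin.sum_univ_two (fun i => m i), ← Finsupp.degree_eq_sum]
    rw [if_neg (by omega), if_neg (by omega), if_neg (by omega), if_neg (by omega)]
    simp

/-- Reduction along the substitution `x ↦ p x + q y`, `y ↦ r x + s y`, on coefficients. -/
lemma good_step {α a b c d : k} (p q r s a' b' c' d' : k) (hdet : p * s - q * r ≠ 0)
    (ha : a' = a * p ^ 3 + b * p ^ 2 * r + c * p * r ^ 2 + d * r ^ 3)
    (hb : b' = 3 * a * p ^ 2 * q + b * (p ^ 2 * s + 2 * p * q * r)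
      + c * (q * r ^ 2 + 2 * p * r * s) + 3 * d * r ^ 2 * s)
    (hc : c' = 3 * a * p * q ^ 2 + b * (q ^ 2 * r + 2 * p * q * s)
      + c * (p * s ^ 2 + 2 * q * r * s) + 3 * d * r * s ^ 2)
    (hd : d' = a * q ^ 3 + b * q ^ 2 * s + c * q * s ^ 2 + d * s ^ 3)
    (h : Good α (form a' b' c' d')) : Good α (form a b c d) := by
  refine Good.of_subst !![p, q; r, s] (by rwa [Matrix.det_fin_two_of]) ?_
  have e : subst !![p, q; r, s] (form a b c d) = form a' b' c' d' := by
    have h3 : (C 3 : MvPolynomial (Fin 2) k) = 3 := map_ofNat C 3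
    have h2 : (C 2 : MvPolynomial (Fin 2) k) = 2 := map_ofNat C 2
    subst ha hb hc hd
    simp [BinaryCubic.subst, form, h2, h3]
    ring
  rwa [e]

section Cases

variable {α : k} (h2 : (2 : k) = 0) (hα : α ^ 2 + α + 1 = 0)
  (hk : ∀ x : k, x = 0 ∨ x = 1 ∨ x = α ∨ x = α ^ 2)

include hk in
lemma good_x3 {e : k} (he : e ≠ 0) : Good α (form e 0 0 0) := by
  apply Good.of_mem
  rcases hk e with rfl | rfl | rfl | rfl
  · exact absurd rfl he
  all_goals simp [form, reps]

lemma good_xy2 : Good α (form 0 0 1 0) := by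
  apply Good.of_mem
  simp [form, reps]

include hk in
lemma good_x3y3 {e : k} (he : e ≠ 0) : Good α (form e 0 0 e) := by
  apply Good.of_mem
  rcases hk e with rfl | rfl | rfl | rfl
  · exact absurd rfl he
  all_goals simp [form, reps, mul_add]

include hk in
lemma good_one_root {e : k} (he : e ≠ 0) : Good α (form e e (e * α) 0) := by
  have key : form e e (e * α) 0 = C e * (X 0 * (X 0 ^ 2 + X 0 * X 1 + C α * X 1 ^ 2)) := by
    simp [form]; ring
  apply Good.of_mem
  rw [key]
  rcases hk e with rfl | rfl | rfl | rfl
  · exact absurd rfl he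
  all_goals simp [reps]

include hk in
lemma good_irred {e : k} (he : e ≠ 0) : Good α (form e 0 0 (e * α)) := by
  have key : form e 0 0 (e * α) = C e * (X 0 ^ 3 + C α * X 1 ^ 3) := by
    simp [form]; ring
  apply Good.of_mem
  rw [key]
  rcases hk e with rfl | rfl | rfl | rfl
  · exact absurd rfl he
  all_goals simp [reps]

include h2 hα hk in
lemma cube_eq_one {x : k} (hx : x ≠ 0) : x ^ 3 = 1 := by
  rcases hk x with rfl | rfl | rfl | rfl
  · exact absurd rfl hx
  all_goals grind

include h2 hα hk in
/-- `e x y (x + y)` splits over `𝔽₄`, as does `e (x³ + y³)`; the substitution sends `x`, `y`, `x + y`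
to the factors `x + y`, `α x + α² y`, `α² x + α y` of `x³ + y³`. -/
lemma good_split {e : k} (he : e ≠ 0) : Good α (form 0 e e 0) :=
  good_step 1 1 α (α ^ 2) e 0 0 e (by grind) (by grind) (by grind) (by grind) (by grind)
    (good_x3y3 hk he)

include h2 hα hk in
/-- Forms `e x (g x² + x y + y²)`: only the class of `g` modulo `{t² + t} = {0, 1}` matters. -/
lemma good_artinSchreier {e : k} (he : e ≠ 0) (g : k) : Good α (form (e * g) e e 0) := by
  have hg : Good α (form (e * α) e e 0) := by
    have hα0 : α ≠ 0 := by grind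
    refine good_step 1 0 0 (α) (e * α) (e * α) (e * α * α) 0 (by simpa)
      (by grind) (by grind) (by grind) (by grind) (good_one_root hk (mul_ne_zero he hα0))
  rcases hk g with rfl | rfl | rfl | rfl
  · simpa using good_split h2 hα hk he
  · exact good_step 1 0 α 1 0 e e 0 (by simp) (by grind) (by grind) (by grind) (by grind)
      (good_split h2 hα hk he)
  · exact hg
  · exact good_step 1 0 α 1 (e * α) e e 0 (by simp) (by grind) (by grind) (by grind) (by grind) hg

include h2 hα hk in
/-- Nonzero forms with the factor `x`. -/
lemma good_of_dvd {a b c : k} (h : ¬ (a = 0 ∧ b = 0 ∧ c = 0)) : Good α (form a b c 0) := by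
  by_cases hc : c = 0
  · subst hc
    by_cases hb : b = 0
    · subst hb
      exact good_x3 hk (by simpa using h)
    · -- the second factor `a x + b y` becomes `x`, and `x` becomes `y`
      refine good_step 0 1 b⁻¹ (b⁻¹ * a) 0 0 1 0 (by simpa) ?_ ?_ ?_ ?_ good_xy2
      all_goals field_simp
      all_goals grind
  · by_cases hb : b = 0
    · -- `a x² + c y² = (a² x + c² y)²`, since squaring twice is the identity of `k`
      subst hb
      have hc3 := cube_eq_one h2 hα hk hc
      have ha4 : a ^ 4 = a := by
        by_cases ha : a = 0
        · simp [ha]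
        · linear_combination a * cube_eq_one h2 hα hk ha
      refine good_step 1 0 (c * a ^ 2) c 0 0 1 0 (by simpa) ?_ ?_ ?_ ?_ good_xy2
      all_goals grind
    · have he : b ^ 2 / c ≠ 0 := by positivity
      refine good_step 1 0 0 (b / c) (b ^ 2 / c * (a / (b ^ 2 / c))) (b ^ 2 / c) (b ^ 2 / c) 0
        ?_ ?_ ?_ ?_ ?_ (good_artinSchreier h2 hα hk he _)
      · simp [hb, hc]
      all_goals field_simp
      all_goals ring

include h2 hα hk in
/-- Forms without a rational root, after completing the cube. -/
lemma good_of_noRoot_depressed {a c d : k} (ha : a ≠ 0)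
    (h : ∀ t : k, a * t ^ 3 + c * t + d ≠ 0) : Good α (form a 0 c d) := by
  have hα0 : α ≠ 0 := by grind
  obtain ⟨u, rfl⟩ : ∃ u, d = a * u := ⟨d / a, by field_simp⟩
  by_cases hc : c = 0
  · subst hc
    rcases hk u with rfl | rfl | rfl | rfl
    · exact absurd (by ring) (h 0)
    · exact absurd (by grind) (h 1)
    · exact good_irred hk ha
    · exact good_step 0 1 1 0 (a * α ^ 2) 0 0 (a * α ^ 2 * α) (by simp)
        (by grind) (by grind) (by grind) (by grind)
        (good_irred hk (mul_ne_zero ha (pow_ne_zero 2 hα0)))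
  · -- `s² = a / c`, so that `y ↦ s y` makes the coefficient of `x y²` equal to `a`
    obtain ⟨s, hs0, hs⟩ : ∃ s : k, s ≠ 0 ∧ c * s ^ 2 = a := by
      have h1 := cube_eq_one h2 hα hk ha
      have h3 := cube_eq_one h2 hα hk hc
      exact ⟨a ^ 2 * c, mul_ne_zero (pow_ne_zero 2 ha) hc, by
        linear_combination a ^ 4 * h3 + a * h1⟩
    have hs3 := cube_eq_one h2 hα hk hs0
    refine good_step 1 0 0 s a 0 a (a * u) (by simpa)
      (by grind) (by grind) (by grind) (by grind) ?_
    have h' : ∀ t : k, t ^ 3 + t + u ≠ 0 := by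
      intro t ht
      refine h (t * s ^ 2) ?_
      have hs6 : s ^ 6 = 1 := by linear_combination (s ^ 3 + 1) * hs3
      linear_combination a * ht + a * t ^ 3 * hs6 + t * hs
    rcases hk u with rfl | rfl | rfl | rfl
    · exact absurd (by ring) (h' 0)
    · -- this substitution turns `x³ + x y² + y³` into `α (x³ + α y³)`
      exact good_step 1 1 (α ^ 2) α (a * α) 0 0 (a * α * α) (by grind)
        (by grind) (by grind) (by grind) (by grind) (good_irred hk (mul_ne_zero ha hα0))
    · exact absurd (by grind) (h' (u ^ 2))
    · exact absurd (by grind) (h' α)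

include h2 hα hk in
lemma good_of_noRoot {a b c d : k} (ha : a ≠ 0)
    (h : ∀ t : k, a * t ^ 3 + b * t ^ 2 + c * t + d ≠ 0) : Good α (form a b c d) := by
  obtain ⟨v, rfl⟩ : ∃ v, b = a * v := ⟨b / a, by field_simp⟩
  refine good_step 1 v 0 1 a 0 (a * v ^ 2 + c) (c * v + d) (by simp)
    (by grind) (by grind) (by grind) (by grind) ?_
  refine good_of_noRoot_depressed h2 hα hk ha fun t ht => h (t + v) ?_
  grind

include h2 hα hk in
lemma good_form {a b c d : k} (h : ¬ (a = 0 ∧ b = 0 ∧ c = 0 ∧ d = 0)) :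
    Good α (form a b c d) := by
  by_cases ha : a = 0
  · subst ha
    exact good_step 0 1 1 0 d c b 0 (by simp) (by ring) (by ring) (by ring) (by ring)
      (good_of_dvd h2 hα hk (by tauto))
  by_cases hr : ∃ t : k, a * t ^ 3 + b * t ^ 2 + c * t + d = 0
  · obtain ⟨t, ht⟩ := hr
    exact good_step 1 t 0 1 a (3 * a * t + b) (3 * a * t ^ 2 + 2 * b * t + c) 0 (by simp)
      (by ring) (by ring) (by ring) (by linear_combination -ht)
      (good_of_dvd h2 hα hk (by tauto))
  · exact good_of_noRoot h2 hα hk ha (by simpa using hr)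

end Cases

lemma two_eq_zero [Fintype k] (hk : Fintype.card k = 4) : (2 : k) = 0 := by
  have h := FiniteField.cast_card_eq_zero k
  rw [hk] at h
  have h' : (2 : k) * 2 = 0 := by rw [← h]; norm_num
  simpa using h'

lemma elements [Fintype k] (hk : Fintype.card k = 4) {α : k} (hα : α ^ 2 + α + 1 = 0) (x : k) :
    x = 0 ∨ x = 1 ∨ x = α ∨ x = α ^ 2 := by
  have h4 := FiniteField.pow_card x
  rw [hk] at h4
  have h2 := two_eq_zero hk
  -- the right-hand side is the factorization of `x⁴ - x`
  have h : x * ((x - 1) * ((x - α) * (x - α ^ 2))) = 0 := by grind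
  simpa [sub_eq_zero] using h

end BinaryCubic

/-- Let `k` be the field with 4 elements and `α ∈ k` with `α² + α + 1 = 0`.
Every nonzero binary cubic form `f ∈ k[x,y]` is `GL₂(k)`-equivalent (via
`f ↦ f(a₁₁x + a₁₂y, a₂₁x + a₂₂y)` for an invertible matrix) to one of the 13 forms
`x³`, `αx³`, `α²x³`, `xy²`, `x³+y³`, `α(x³+y³)`, `α²(x³+y³)`, `x(x²+xy+αy²)`,
`αx(x²+xy+αy²)`, `α²x(x²+xy+αy²)`, `x³+αy³`, `α(x³+αy³)`, `α²(x³+αy³)`. -/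
theorem stmt_13 (k : Type*) [Field k] [Fintype k] (hk : Fintype.card k = 4)
    (α : k) (hα : α ^ 2 + α + 1 = 0)
    (f : MvPolynomial (Fin 2) k) (hf0 : f ≠ 0) (hf3 : f.IsHomogeneous 3) :
    ∃ A : Matrix (Fin 2) (Fin 2) k, A.det ≠ 0 ∧
      MvPolynomial.bind₁
        (fun i => MvPolynomial.C (A i 0) * MvPolynomial.X 0
          + MvPolynomial.C (A i 1) * MvPolynomial.X 1) f
      ∈ ({X 0 ^ 3,
          C α * X 0 ^ 3,
          C (α ^ 2) * X 0 ^ 3,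
          X 0 * X 1 ^ 2,
          X 0 ^ 3 + X 1 ^ 3,
          C α * (X 0 ^ 3 + X 1 ^ 3),
          C (α ^ 2) * (X 0 ^ 3 + X 1 ^ 3),
          X 0 * (X 0 ^ 2 + X 0 * X 1 + C α * X 1 ^ 2),
          C α * (X 0 * (X 0 ^ 2 + X 0 * X 1 + C α * X 1 ^ 2)),
          C (α ^ 2) * (X 0 * (X 0 ^ 2 + X 0 * X 1 + C α * X 1 ^ 2)),
          X 0 ^ 3 + C α * X 1 ^ 3,
          C α * (X 0 ^ 3 + C α * X 1 ^ 3),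
          C (α ^ 2) * (X 0 ^ 3 + C α * X 1 ^ 3)} : Set (MvPolynomial (Fin 2) k)) := by
  obtain ⟨a, b, c, d, rfl⟩ := BinaryCubic.eq_form hf3
  refine BinaryCubic.good_form (BinaryCubic.two_eq_zero hk) hα (BinaryCubic.elements hk hα) ?_
  rintro ⟨rfl, rfl, rfl, rfl⟩
  exact hf0 (by simp [BinaryCubic.form])
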